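/- arXiv:0812.3359 — 3 statements merged into one kernel-verified Lean document; each statement's English description precedes it below -/
import Mathlib

section
/- Let f be an M-map with |f(∅)| < 1, and let f^{*k} denote the k-fold convolution power of f. Then for every subset a ⊆ Ω, the series Σ_{k=1}^∞ (−1)^{k+1} f^{*k}(a)/k converges, with sum equal to log*(1* + f)(a); here (1* + f)(∅) = 1 + f(∅) ≠ 0, log* is defined on nonempty sets by the partition formula, and log*(1* + f)(∅) = Log(1 + f(∅)), the principal complex logarithm. -/
open Finset

/-- The convolution product of M-maps: `(f * g)(a) = ∑_{b ⊆ a} f(b) · g(a \ b)`. -/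
noncomputable def MMap.conv {Ω : Type*} [DecidableEq Ω] (f g : Finset Ω → ℂ) : Finset Ω → ℂ :=
  fun a => ∑ b ∈ a.powerset, f b * g (a \ b)

/-- The cumulant `log* f` on nonempty subsets:
`log* f(a) = ∑_p (|p|−1)!·(−1)^{|p|−1}·(∏_{c ∈ p} f(c))/f(∅)^{|p|}`,
summed over all set partitions `p` of `a`, `|p|` being the number of blocks. -/
noncomputable def MMap.logStar {Ω : Type*} [DecidableEq Ω] (f : Finset Ω → ℂ) :
    Finset Ω → ℂ := fun a =>
  ∑ p : Finpartition a,
    (Nat.factorial (p.parts.card - 1) : ℂ) * (-1 : ℂ) ^ (p.parts.card - 1) *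
      (∏ c ∈ p.parts, f c) / (f ∅) ^ p.parts.card

/-- The M-map `1*`, with `1*(∅) = 1` and `1*(a) = 0` otherwise. -/
noncomputable def MMap.oneStar {Ω : Type*} [DecidableEq Ω] : Finset Ω → ℂ :=
  fun a => if a = ∅ then 1 else 0

/-- The `k`-fold convolution power `f^{*k}`, with `f^{*0} = 1*` and `f^{*1} = f`. -/
noncomputable def MMap.convPow {Ω : Type*} [DecidableEq Ω] (f : Finset Ω → ℂ) :
    ℕ → Finset Ω → ℂ
  | 0 => MMap.oneStar
  | k + 1 => MMap.conv f (MMap.convPow f k)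

/-- The cumulant extended to the empty set by the principal complex logarithm:
`log* f(∅) = Log f(∅)`. -/
noncomputable def MMap.logStarFull {Ω : Type*} [DecidableEq Ω] (f : Finset Ω → ℂ) :
    Finset Ω → ℂ := fun a =>
  if a = ∅ then Complex.log (f ∅) else MMap.logStar f a

/-- Weighted sum over set partitions. -/
noncomputable def MMap.partSum {Ω : Type*} [DecidableEq Ω] (f : Finset Ω → ℂ) (w : ℕ → ℂ)
    (a : Finset Ω) : ℂ :=
  ∑ p : Finpartition a, w p.parts.card * ∏ c ∈ p.parts, f c

theorem MMap.partSum_insert {Ω : Type*} [DecidableEq Ω] (f : Finset Ω → ℂ) (w : ℕ → ℂ)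
    (i : Ω) (a : Finset Ω) (hi : i ∉ a) :
    MMap.partSum f w (insert i a) =
      ∑ b ∈ a.powerset, f (insert i b) * MMap.partSum f (fun m => w (m + 1)) (a \ b) := by
  unfold MMap.partSum
  simp_rw [Finset.mul_sum]
  rw [Finset.sum_sigma']
  symm
  have hd : ∀ b ∈ a.powerset, Disjoint (a \ b) (insert i b) := by
    intro b hb
    rw [Finset.disjoint_left]
    intro x hx hx'
    rw [Finset.mem_sdiff] at hx
    rcases Finset.mem_insert.1 hx' with rfl | h
    · exact hi hx.1
    · exact hx.2 h
  have hu : ∀ b ∈ a.powerset, (a \ b) ⊔ (insert i b) = insert i a := by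
    intro b hb
    rw [Finset.mem_powerset] at hb
    ext x
    have := @hb x
    simp only [Finset.sup_eq_union, Finset.mem_union, Finset.mem_sdiff, Finset.mem_insert]
    tauto
  have hn : ∀ (b : Finset Ω) (q : Finpartition (a \ b)), insert i b ∉ q.parts := by
    intro b q h
    have := q.le h (Finset.mem_insert_self i b)
    exact hi (Finset.mem_sdiff.1 this).1
  refine Finset.sum_bij
    (fun x hx => x.2.extend (b := insert i x.1) (c := insert i a)
      (Finset.insert_ne_empty _ _) (hd _ (Finset.mem_sigma.1 hx).1)
      (hu _ (Finset.mem_sigma.1 hx).1)) ?_ ?_ ?_ ?_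
  · intros; exact Finset.mem_univ _
  · rintro ⟨b, q⟩ hx ⟨b', q'⟩ hx' h
    have hb : b ⊆ a := Finset.mem_powerset.1 (Finset.mem_sigma.1 hx).1
    have hb' : b' ⊆ a := Finset.mem_powerset.1 (Finset.mem_sigma.1 hx').1
    have hp : insert (insert i b) q.parts = insert (insert i b') q'.parts :=
      congrArg Finpartition.parts h
    have h1 : insert i b = insert i b' := by
      have : insert i b ∈ insert (insert i b') q'.parts := hp ▸ Finset.mem_insert_self _ _
      rcases Finset.mem_insert.1 this with h | h
      · exact h
      · exact absurd (Finset.mem_sdiff.1 (q'.le h (Finset.mem_insert_self i b))).1 hi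
    have h2 : b = b' := by
      rw [← Finset.erase_insert (fun h => hi (hb h)), h1,
        Finset.erase_insert (fun h => hi (hb' h))]
    subst h2
    have h3 : q.parts = q'.parts := by
      rw [← Finset.erase_insert (hn b q), hp, Finset.erase_insert (hn b q')]
    have h4 : q = q' := Finpartition.ext h3
    rw [h4]
  · intro p _
    have hmem : p.part i ∈ p.parts := p.part_mem.2 (Finset.mem_insert_self i a)
    have hii : i ∈ p.part i := p.mem_part (Finset.mem_insert_self i a)
    have hsub : (p.part i).erase i ⊆ a := by
      intro x hx
      have h1 := Finset.mem_erase.1 hx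
      exact (Finset.mem_insert.1 (p.part_subset i h1.2)).resolve_left h1.1
    have hsup : (p.parts.erase (p.part i)).sup id = a \ (p.part i).erase i := by
      ext x
      simp only [Finset.mem_sup, Finset.mem_erase, Finset.mem_sdiff, id]
      constructor
      · rintro ⟨c, ⟨hc, hcp⟩, hx⟩
        have hxi : x ∉ p.part i := fun h => hc (p.eq_of_mem_parts hcp hmem hx h)
        refine ⟨?_, fun h => hxi h.2⟩
        refine (Finset.mem_insert.1 (p.le hcp hx)).resolve_left ?_
        rintro rfl
        exact hxi hii
      · rintro ⟨hxa, hx⟩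
        have hxi : x ∉ p.part i := fun h => hx ⟨fun e => hi (e ▸ hxa), h⟩
        have hxa' := Finset.mem_insert_of_mem (b := i) hxa
        refine ⟨p.part x, ⟨fun e => hxi (e ▸ p.mem_part hxa'), p.part_mem.2 hxa'⟩,
          p.mem_part hxa'⟩
    refine ⟨⟨(p.part i).erase i, p.ofSubset (Finset.erase_subset _ _) hsup⟩, ?_, ?_⟩
    · exact Finset.mem_sigma.2 ⟨Finset.mem_powerset.2 hsub, Finset.mem_univ _⟩
    · apply Finpartition.ext
      change insert (insert i ((p.part i).erase i)) (p.parts.erase (p.part i)) = p.parts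
      rw [Finset.insert_erase hii, Finset.insert_erase hmem]
  · rintro ⟨b, q⟩ hx
    change _ = w (insert (insert i b) q.parts).card * ∏ c ∈ insert (insert i b) q.parts, f c
    rw [Finset.card_insert_of_notMem (hn b q), Finset.prod_insert (hn b q)]
    ring

theorem MMap.conv_left_comm {Ω : Type*} [DecidableEq Ω] (f g h : Finset Ω → ℂ) (a : Finset Ω) :
    MMap.conv f (MMap.conv g h) a = MMap.conv g (MMap.conv f h) a := by
  unfold MMap.conv
  simp_rw [Finset.mul_sum]
  rw [Finset.sum_comm' (t' := a.powerset) (s' := fun c => (a \ c).powerset)]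
  · refine Finset.sum_congr rfl fun c _ => Finset.sum_congr rfl fun b _ => ?_
    rw [sdiff_right_comm]
    ring
  · intro b c
    simp only [Finset.mem_powerset, Finset.subset_sdiff]
    rw [disjoint_comm]
    tauto

theorem MMap.convPow_insert {Ω : Type*} [DecidableEq Ω] (f : Finset Ω → ℂ) (i : Ω) (k : ℕ) :
    ∀ a : Finset Ω, i ∉ a → MMap.convPow f (k + 1) (insert i a) =
      (k + 1) * MMap.conv (fun b => f (insert i b)) (MMap.convPow f k) a := by
  induction k with
  | zero =>
    intro a hi
    have hz : ∀ g : Finset Ω → ℂ, ∀ s, MMap.conv g MMap.oneStar s = g s := by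
      intro g s
      unfold MMap.conv MMap.oneStar
      rw [Finset.sum_eq_single s]
      · simp
      · intro b hb hne
        rw [if_neg, mul_zero]
        intro h
        exact hne (Finset.Subset.antisymm (Finset.mem_powerset.1 hb) (Finset.sdiff_eq_empty_iff_subset.1 h))
      · simp
    simp only [MMap.convPow, hz]
    simp
  | succ k ih =>
    intro a hi
    rw [MMap.convPow, MMap.conv, Finset.sum_powerset_insert hi]
    have h1 : ∑ t ∈ a.powerset, f t * MMap.convPow f (k + 1) (insert i a \ t) =
        (k + 1) * MMap.conv f (MMap.conv (fun b => f (insert i b)) (MMap.convPow f k)) a := by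
      rw [MMap.conv, Finset.mul_sum]
      refine Finset.sum_congr rfl fun t ht => ?_
      rw [Finset.insert_sdiff_of_notMem _ (fun h => hi (Finset.mem_powerset.1 ht h)),
        ih _ (fun h => hi (Finset.mem_sdiff.1 h).1)]
      ring
    have h2 : ∑ t ∈ a.powerset, f (insert i t) * MMap.convPow f (k + 1) (insert i a \ insert i t) =
        MMap.conv (fun b => f (insert i b)) (MMap.convPow f (k + 1)) a := by
      refine Finset.sum_congr rfl fun t ht => ?_
      rw [Finset.insert_sdiff_insert, Finset.sdiff_insert_of_notMem hi]
    rw [h1, h2, MMap.conv_left_comm]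
    change _ * MMap.conv _ (MMap.convPow f (k + 1)) a + _ = _
    push_cast
    ring

theorem MMap.convPow_empty {Ω : Type*} [DecidableEq Ω] (f : Finset Ω → ℂ) (k : ℕ) :
    MMap.convPow f k ∅ = f ∅ ^ k := by
  induction k with
  | zero => simp [MMap.convPow, MMap.oneStar]
  | succ k ih => simp [MMap.convPow, MMap.conv, ih, pow_succ']

theorem MMap.convPow_eq_partSum {Ω : Type*} [DecidableEq Ω] (f : Finset Ω → ℂ) (n : ℕ) :
    ∀ (a : Finset Ω) (k : ℕ), a.card = n → MMap.convPow f k a =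
      MMap.partSum f (fun m => (k.descFactorial m : ℂ) * f ∅ ^ (k - m)) a := by
  induction n using Nat.strong_induction_on with
  | _ n ih =>
    intro a k hc
    rcases Finset.eq_empty_or_nonempty a with rfl | ⟨i, hi⟩
    · rw [MMap.convPow_empty, MMap.partSum]
      change _ = ∑ p : Finpartition (⊥ : Finset Ω), _
      rw [Fintype.sum_unique]
      have he : (default : Finpartition (⊥ : Finset Ω)).parts = ∅ := rfl
      rw [he]
      simp
    · obtain ⟨b, hib, rfl⟩ : ∃ b, i ∉ b ∧ insert i b = a :=
        ⟨a.erase i, Finset.notMem_erase _ _, Finset.insert_erase hi⟩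
      rw [MMap.partSum_insert _ _ _ _ hib]
      rcases k with _ | k
      · simp [MMap.convPow, MMap.oneStar, MMap.partSum]
      · rw [MMap.convPow_insert _ _ _ _ hib, MMap.conv, Finset.mul_sum]
        refine Finset.sum_congr rfl fun c hc' => ?_
        rw [ih (b \ c).card _ _ _ rfl, MMap.partSum, MMap.partSum, Finset.mul_sum,
          Finset.mul_sum, Finset.mul_sum]
        · refine Finset.sum_congr rfl fun p _ => ?_
          rw [Nat.succ_descFactorial_succ, Nat.add_sub_add_right]
          push_cast
          ring
        · rw [← hc, Finset.card_insert_of_notMem hib]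
          exact Nat.lt_succ_of_le (Finset.card_le_card Finset.sdiff_subset)

theorem MMap.hasSum_of_eq {u v : ℕ → ℂ} {s t : ℂ} (h : HasSum u s) (huv : ∀ k, v k = u k)
    (hst : t = s) : HasSum v t := by
  have : v = u := funext huv
  rw [this, hst]
  exact h

theorem MMap.hasSum_aux (x : ℂ) (hx : ‖x‖ < 1) (j : ℕ) :
    HasSum (fun k : ℕ => (-1 : ℂ) ^ k * (((k + 1).descFactorial (j + 1) : ℂ) *
      x ^ (k + 1 - (j + 1))) / (k + 1)) ((j.factorial : ℂ) * (-1) ^ j / (1 + x) ^ (j + 1)) := by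
  have h := (hasSum_choose_mul_geometric_of_norm_lt_one (𝕜 := ℂ) j (r := -x)
    (by rwa [norm_neg])).mul_left ((j.factorial : ℂ) * (-1) ^ j)
  rw [sub_neg_eq_add, mul_one_div] at h
  rw [← hasSum_nat_add_iff' j, Finset.sum_eq_zero, sub_zero]
  · refine MMap.hasSum_of_eq h (fun n => ?_) rfl
    rw [Nat.succ_descFactorial_succ, Nat.add_sub_add_right, Nat.add_sub_cancel,
      Nat.descFactorial_eq_factorial_mul_choose, neg_pow x n]
    have hne : ((n : ℂ) + j + 1) ≠ 0 := by exact_mod_cast Nat.succ_ne_zero (n + j)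
    push_cast
    field_simp
    ring
  · intro k hk
    rw [Nat.succ_descFactorial_succ, Nat.descFactorial_of_lt (Finset.mem_range.1 hk)]
    simp

/-- Power series for the cumulant: if `|f(∅)| < 1` then `(1* + f)(∅) = 1 + f(∅) ≠ 0`
and, for every subset `a ⊆ Ω`, the series `∑_{k=1}^∞ (−1)^{k+1} f^{*k}(a)/k`
converges with sum `log*(1* + f)(a)`. -/
theorem logStar_power_series {Ω : Type*} [DecidableEq Ω] [Fintype Ω]
    (f : Finset Ω → ℂ) (hf : ‖f ∅‖ < 1) (a : Finset Ω) :
    ((MMap.oneStar (Ω := Ω) + f) ∅) ≠ 0 ∧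
    HasSum (fun k : ℕ => (-1 : ℂ) ^ k * MMap.convPow f (k + 1) a / (k + 1))
      (MMap.logStarFull (MMap.oneStar (Ω := Ω) + f) a) := by
  have h0 : (MMap.oneStar (Ω := Ω) + f) ∅ = 1 + f ∅ := by simp [MMap.oneStar]
  refine ⟨?_, ?_⟩
  · rw [h0]
    intro h
    have : f ∅ = -1 := by linear_combination h
    rw [this] at hf
    simp at hf
  rcases Finset.eq_empty_or_nonempty a with rfl | ha
  · have h := (hasSum_nat_add_iff' 1).2 (Complex.hasSum_taylorSeries_log hf)
    rw [MMap.logStarFull, if_pos rfl, h0]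
    simp only [Finset.sum_range_one, Nat.cast_zero, div_zero, sub_zero] at h
    refine MMap.hasSum_of_eq h (fun k => ?_) rfl
    rw [MMap.convPow_empty]
    push_cast
    ring
  · rw [MMap.logStarFull, if_neg ha.ne_empty, MMap.logStar, h0]
    have hp : ∀ p : Finpartition a, HasSum (fun k : ℕ => (-1 : ℂ) ^ k *
        (((k + 1).descFactorial p.parts.card : ℂ) * f ∅ ^ (k + 1 - p.parts.card) *
          ∏ c ∈ p.parts, f c) / (k + 1))
        ((Nat.factorial (p.parts.card - 1) : ℂ) * (-1 : ℂ) ^ (p.parts.card - 1) *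
      (∏ c ∈ p.parts, (MMap.oneStar (Ω := Ω) + f) c) / (1 + f ∅) ^ p.parts.card) := by
      intro p
      have hpos : p.parts.card ≠ 0 := by
        rw [Finset.card_ne_zero]
        exact p.parts_nonempty ha.ne_empty
      obtain ⟨j, hj⟩ := Nat.exists_eq_succ_of_ne_zero hpos
      have hprod : ∏ c ∈ p.parts, (MMap.oneStar (Ω := Ω) + f) c = ∏ c ∈ p.parts, f c := by
        refine Finset.prod_congr rfl fun c hc => ?_
        simp [MMap.oneStar, (p.nonempty_of_mem_parts hc).ne_empty]
      rw [hprod, hj]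
      refine MMap.hasSum_of_eq ((MMap.hasSum_aux (f ∅) hf j).mul_right (∏ c ∈ p.parts, f c))
        (fun k => ?_) ?_
      · simp only [Nat.succ_eq_add_one]
        ring
      · simp only [Nat.succ_eq_add_one, Nat.add_sub_cancel]
        ring
    have h := hasSum_sum (s := Finset.univ) fun p _ => hp p
    refine MMap.hasSum_of_eq h (fun k => ?_) rfl
    rw [MMap.convPow_eq_partSum f _ a (k + 1) rfl, MMap.partSum, Finset.mul_sum,
      Finset.sum_div]
end

section
/- (Duhamel/Dyson integral equation for the matrix exponential.) Let Y and V be d×d complex matrices and let τ ∈ ℝ. Then exp(τ(Y + V)) = exp(τY) + ∫₀^τ exp((τ − s)·Y) · V · exp(s·(Y + V)) ds. -/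
open NormedSpace

attribute [local instance] Matrix.normedAddCommGroup Matrix.normedSpace

theorem duhamel_aux {A : Type*} [NormedRing A] [NormedAlgebra ℝ A] [CompleteSpace A]
    (Y V : A) (τ s : ℝ) :
    HasDerivAt (fun s : ℝ => exp ((τ - s) • Y) * exp (s • (Y + V)))
      (exp ((τ - s) • Y) * V * exp (s • (Y + V))) s := by
  have h1 : HasDerivAt (fun s : ℝ => exp ((τ - s) • Y)) (-(exp ((τ - s) • Y) * Y)) s := by
    have h := (hasDerivAt_exp_smul_const (𝕂 := ℝ) Y (τ - s)).scomp s
      ((hasDerivAt_id s).const_sub τ)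
    simpa [Function.comp_def] using h
  have h2 := hasDerivAt_exp_smul_const' (𝕂 := ℝ) (Y + V) s
  refine (h1.mul h2).congr_deriv ?_
  generalize exp ((τ - s) • Y) = a, exp (s • (Y + V)) = b
  noncomm_ring

theorem duhamel_aux_cont {A : Type*} [NormedRing A] [NormedAlgebra ℝ A] [CompleteSpace A]
    (Y V : A) (τ : ℝ) :
    Continuous (fun s : ℝ => exp ((τ - s) • Y) * V * exp (s • (Y + V))) := by
  have h (X : A) : Continuous (fun s : ℝ => exp (s • X)) :=
    continuous_iff_continuousAt.2 fun s =>
      (hasDerivAt_exp_smul_const (𝕂 := ℝ) X s).continuousAt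
  exact (((h Y).comp (continuous_const.sub continuous_id)).mul continuous_const).mul (h (Y + V))

theorem duhamel_deriv (d : ℕ) (Y V : Matrix (Fin d) (Fin d) ℂ) (τ s : ℝ) :
    HasDerivAt (fun s : ℝ => exp ((τ - s) • Y) * exp (s • (Y + V)))
      (exp ((τ - s) • Y) * V * exp (s • (Y + V))) s :=
  @duhamel_aux (Matrix (Fin d) (Fin d) ℂ) Matrix.linftyOpNormedRing
    Matrix.linftyOpNormedAlgebra inferInstance Y V τ s

theorem duhamel_cont (d : ℕ) (Y V : Matrix (Fin d) (Fin d) ℂ) (τ : ℝ) :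
    Continuous (fun s : ℝ => exp ((τ - s) • Y) * V * exp (s • (Y + V))) :=
  @duhamel_aux_cont (Matrix (Fin d) (Fin d) ℂ) Matrix.linftyOpNormedRing
    Matrix.linftyOpNormedAlgebra inferInstance Y V τ

/-- Duhamel/Dyson integral equation for the matrix exponential: for `d×d` complex
matrices `Y`, `V` and `τ ∈ ℝ`,
`exp(τ(Y + V)) = exp(τY) + ∫₀^τ exp((τ − s)Y) · V · exp(s(Y + V)) ds`. -/
theorem duhamel_matrix_exp (d : ℕ) (Y V : Matrix (Fin d) (Fin d) ℂ) (τ : ℝ) :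
    exp (τ • (Y + V)) =
      exp (τ • Y) +
        ∫ s in (0 : ℝ)..τ, exp ((τ - s) • Y) * V * exp (s • (Y + V)) := by
  rw [intervalIntegral.integral_eq_sub_of_hasDerivAt
    (fun s _ => duhamel_deriv d Y V τ s) ((duhamel_cont d Y V τ).intervalIntegrable _ _)]
  simp
end

section
/- (Dyson lemma.) Let Y, X_1, …, X_n be d×d complex matrices, let τ > 0, and let 1 ≤ k ≤ n. Then the mixed partial derivative ∂^k/∂γ_1⋯∂γ_k of the map γ ↦ exp(τ(Y + Σ_{j=1}^n γ_j X_j)), evaluated at γ = 0, equals Σ_{π ∈ S_k} ∫_{0 ≤ t_1 ≤ t_2 ≤ ⋯ ≤ t_k ≤ τ} e^{(τ − t_k)Y} X_{π(k)} e^{(t_k − t_{k−1})Y} X_{π(k−1)} ⋯ e^{(t_2 − t_1)Y} X_{π(1)} e^{t_1 Y} dt_1 ⋯ dt_k, where the sum runs over all permutations π of {1,…,k} and the integral is over the simplex {t ∈ ℝ^k : 0 ≤ t_1 ≤ ⋯ ≤ t_k ≤ τ}. -/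
open Finset NormedSpace MeasureTheory

attribute [local instance] Matrix.normedAddCommGroup Matrix.normedSpace

/-- The mixed partial derivative `∂_a h(x)` of `h : ℝⁿ → E` with respect to the
(distinct) coordinates indexed by the finite set `a = {a_1 < ⋯ < a_k}`, defined by
feeding the corresponding standard basis vectors to the `k`-th iterated Fréchet
derivative.  For smooth `h` this is the usual mixed partial derivative,
independent of the order of differentiation, and `∂_∅ h(x) = h(x)`. -/
noncomputable def mixedPartial {n : ℕ} {E : Type*} [NormedAddCommGroup E]
    [NormedSpace ℝ E] (h : (Fin n → ℝ) → E) (a : Finset (Fin n)) (x : Fin n → ℝ) : E :=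
  iteratedFDeriv ℝ a.card h x (fun i => Pi.single (a.orderEmbOfFin rfl i) 1)

section Dyson

set_option linter.unusedSectionVars false

variable {A : Type*} [NormedRing A] [NormedAlgebra ℝ A] [CompleteSpace A]

/-- The map `x ↦ (v ↦ a * v * x)`. -/
noncomputable def dysonPhi (a : A) : A →L[ℝ] A →L[ℝ] A :=
  ((ContinuousLinearMap.compL ℝ A A A).flip (ContinuousLinearMap.mul ℝ A a)).comp
    (ContinuousLinearMap.mul ℝ A).flip

theorem dysonPhi_apply (a x v : A) : dysonPhi a x v = a * v * x := by
  simp [dysonPhi]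

theorem dysonPhi_continuous : Continuous (dysonPhi : A → A →L[ℝ] A →L[ℝ] A) := by
  unfold dysonPhi
  fun_prop

/-- Multiplication of a multilinear map by a new last variable. -/
noncomputable def dysonB {k : ℕ} (a : A) (q : A [×k]→L[ℝ] A) : A [×(k+1)]→L[ℝ] A :=
  (continuousMultilinearCurryRightEquiv' ℝ k A A).symm
    (ContinuousLinearMap.compContinuousMultilinearMapL ℝ (fun _ : Fin k => A) A (A →L[ℝ] A)
      (dysonPhi a) q)

theorem dysonB_apply {k : ℕ} (a : A) (q : A [×k]→L[ℝ] A) (w : Fin (k+1) → A) :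
    dysonB a q w = a * w (Fin.last k) * q (Fin.init w) := by
  rw [← dysonPhi_apply]; rfl

theorem dysonB_continuous {k : ℕ} {Z : Type*} [TopologicalSpace Z] {a : Z → A}
    {q : Z → A [×k]→L[ℝ] A} (ha : Continuous a) (hq : Continuous q) :
    Continuous fun z => dysonB (a z) (q z) := by
  unfold dysonB
  refine (continuousMultilinearCurryRightEquiv' ℝ k A A).symm.continuous.comp ?_
  exact (isBoundedBilinearMap_compMultilinear (𝕜 := ℝ) (E := fun _ : Fin k => A) (F := A)
    (G := A →L[ℝ] A)).continuous.comp ((dysonPhi_continuous.comp ha).prodMk hq)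

theorem dysonB_norm {k : ℕ} (a : A) (q : A [×k]→L[ℝ] A) : ‖dysonB a q‖ ≤ ‖a‖ * ‖q‖ := by
  refine ContinuousMultilinearMap.opNorm_le_bound (by positivity) fun w => ?_
  rw [dysonB_apply, Fin.prod_univ_castSucc]
  calc _ ≤ ‖a‖ * ‖w (Fin.last k)‖ * ‖q (Fin.init w)‖ :=
        (norm_mul_le _ _).trans (by gcongr; exact norm_mul_le _ _)
    _ ≤ ‖a‖ * ‖w (Fin.last k)‖ * (‖q‖ * ∏ i, ‖w (Fin.castSucc i)‖) := by
        gcongr; exact q.le_opNorm _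
    _ = _ := by ring

theorem dyson_exp_continuous {Z : Type*} [TopologicalSpace Z] {f : Z → A} (hf : Continuous f) :
    Continuous fun z => exp (f z) := by
  let _ : NormedAlgebra ℚ A := NormedAlgebra.restrictScalars ℚ ℝ A
  exact exp_continuous.comp hf

/-- Coefficients of the Dyson series. -/
noncomputable def dysonP (Y : A) : (k : ℕ) → ℝ → A [×k]→L[ℝ] A
  | 0, τ => ContinuousMultilinearMap.constOfIsEmpty ℝ _ (exp (τ • Y))
  | k+1, τ => ∫ s in (0:ℝ)..τ, dysonB (exp ((τ - s) • Y)) (dysonP Y k s)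

theorem dysonP_continuous (Y : A) (k : ℕ) : Continuous (dysonP Y k) := by
  induction k with
  | zero =>
    have : Continuous fun τ : ℝ => exp (τ • Y) := dyson_exp_continuous (by fun_prop)
    exact (continuousMultilinearCurryFin0 ℝ A A).symm.continuous.comp this
  | succ k ih =>
    refine intervalIntegral.continuous_parametric_intervalIntegral_of_continuous
      (f := fun τ s => dysonB (exp ((τ - s) • Y)) (dysonP Y k s)) ?_ continuous_id
    exact dysonB_continuous (dyson_exp_continuous (by fun_prop)) (ih.comp continuous_snd)

theorem dysonP_int_continuous (Y : A) (k : ℕ) (τ : ℝ) :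
    Continuous fun s => dysonB (exp ((τ - s) • Y)) (dysonP Y k s) :=
  dysonB_continuous (dyson_exp_continuous (by fun_prop)) (dysonP_continuous Y k)

theorem dysonP_succ_apply (Y : A) (k : ℕ) (τ : ℝ) (w : Fin (k+1) → A) :
    dysonP Y (k+1) τ w =
      ∫ s in (0:ℝ)..τ, exp ((τ - s) • Y) * w (Fin.last k) * dysonP Y k s (Fin.init w) := by
  have h := ContinuousLinearMap.intervalIntegral_comp_comm
    (ContinuousMultilinearMap.apply ℝ (fun _ : Fin (k+1) => A) A w)
    ((dysonP_int_continuous Y k τ).intervalIntegrable (μ := volume) 0 τ)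
  simp only [ContinuousMultilinearMap.apply_apply, dysonB_apply] at h
  rw [h]; rfl

theorem dysonP_norm (Y : A) (k : ℕ) {C T : ℝ} (hC : ∀ r ∈ Set.Icc 0 T, ‖exp (r • Y)‖ ≤ C)
    {t : ℝ} (ht : t ∈ Set.Icc 0 T) : ‖dysonP Y k t‖ ≤ C * (C * T) ^ k := by
  have hC0 : 0 ≤ C := (norm_nonneg _).trans (hC t ht)
  have hT0 : 0 ≤ T := ht.1.trans ht.2
  induction k generalizing t with
  | zero =>
    unfold dysonP
    rw [ContinuousMultilinearMap.norm_constOfIsEmpty]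
    simpa using hC t ht
  | succ k ih =>
    unfold dysonP
    refine (intervalIntegral.norm_integral_le_of_norm_le_const
      (C := C * (C * (C * T)^k)) fun s hs => ?_).trans ?_
    · rw [Set.uIoc_of_le ht.1] at hs
      refine (dysonB_norm _ _).trans ?_
      gcongr
      · exact hC _ ⟨by linarith [hs.2], by linarith [hs.1, ht.2]⟩
      · exact ih ⟨hs.1.le, hs.2.trans ht.2⟩
    · rw [sub_zero, abs_of_nonneg ht.1, pow_succ]
      calc _ ≤ C * (C * (C * T)^k) * T := by gcongr; exact ht.2
        _ = _ := by ring

theorem dyson_duhamel (Y w : A) (t : ℝ) :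
    exp (t • (Y + w)) =
      exp (t • Y) + ∫ s in (0:ℝ)..t, exp ((t - s) • Y) * w * exp (s • (Y + w)) := by
  have hd : ∀ s : ℝ, HasDerivAt (fun s : ℝ => exp ((t - s) • Y) * exp (s • (Y + w)))
      (exp ((t - s) • Y) * w * exp (s • (Y + w))) s := by
    intro s
    have h1 := (hasDerivAt_exp_smul_const (𝕂 := ℝ) Y (t - s)).scomp s
      ((hasDerivAt_id s).const_sub t)
    have h2 := hasDerivAt_exp_smul_const' (𝕂 := ℝ) (Y + w) s
    have h3 := h1.mul h2
    convert! h3 using 1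
    simp [mul_add, add_mul, mul_assoc]
  have h := intervalIntegral.integral_eq_sub_of_hasDerivAt (a := 0) (b := t)
    (fun s _ => hd s) (Continuous.intervalIntegrable
      (((dyson_exp_continuous (by fun_prop)).mul continuous_const).mul
        (dyson_exp_continuous (by fun_prop))) _ _)
  rw [h]; simp

/-- Remainder of the Dyson series. -/
noncomputable def dysonR (Y w : A) (N : ℕ) (t : ℝ) : A :=
  exp (t • (Y + w)) - ∑ k ∈ Finset.range N, dysonP Y k t (fun _ => w)

theorem dysonR_succ (Y w : A) (N : ℕ) (t : ℝ) :
    dysonR Y w (N+1) t = ∫ s in (0:ℝ)..t, exp ((t - s) • Y) * w * dysonR Y w N s := by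
  have hP : ∀ k, Continuous fun s => dysonP Y k s (fun _ => w) := fun k =>
    (ContinuousMultilinearMap.apply ℝ (fun _ : Fin k => A) A (fun _ => w)).continuous.comp
      (dysonP_continuous Y k)
  have hE : Continuous fun s : ℝ => exp ((t - s) • Y) * w :=
    (dyson_exp_continuous (by fun_prop)).mul continuous_const
  have hX : Continuous fun s : ℝ => exp (s • (Y + w)) := dyson_exp_continuous (by fun_prop)
  simp only [dysonR, mul_sub, Finset.mul_sum]
  have hEX : Continuous fun s : ℝ => exp ((t - s) • Y) * w * exp (s • (Y + w)) := hE.mul hX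
  have hEP : ∀ k, Continuous fun s : ℝ => exp ((t - s) • Y) * w * dysonP Y k s (fun _ => w) :=
    fun k => hE.mul (hP k)
  rw [intervalIntegral.integral_sub (hEX.intervalIntegrable _ _)
    ((continuous_finsetSum _ fun k _ => hEP k).intervalIntegrable _ _),
    intervalIntegral.integral_finsetSum fun k _ => (hEP k).intervalIntegrable _ _,
    Finset.sum_range_succ', dyson_duhamel Y w t]
  have h0 : dysonP Y 0 t (fun _ => w) = exp (t • Y) := rfl
  have hs : ∀ k, dysonP Y (k+1) t (fun _ => w) =
      ∫ s in (0:ℝ)..t, exp ((t - s) • Y) * w * dysonP Y k s (fun _ => w) := fun k =>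
    dysonP_succ_apply Y k t _
  simp only [h0, hs]
  abel

theorem dysonR_norm (Y w : A) (N : ℕ) {C T M : ℝ} (hC : ∀ r ∈ Set.Icc 0 T, ‖exp (r • Y)‖ ≤ C)
    (hM : ∀ r ∈ Set.Icc 0 T, ‖exp (r • (Y + w))‖ ≤ M)
    {t : ℝ} (ht : t ∈ Set.Icc 0 T) : ‖dysonR Y w N t‖ ≤ M * (C * T * ‖w‖) ^ N := by
  have hC0 : 0 ≤ C := (norm_nonneg _).trans (hC t ht)
  have hM0 : 0 ≤ M := (norm_nonneg _).trans (hM t ht)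
  have hT0 : 0 ≤ T := ht.1.trans ht.2
  induction N generalizing t with
  | zero => simpa [dysonR] using hM t ht
  | succ k ih =>
    rw [dysonR_succ]
    refine (intervalIntegral.norm_integral_le_of_norm_le_const
      (C := C * ‖w‖ * (M * (C * T * ‖w‖)^k)) fun s hs => ?_).trans ?_
    · rw [Set.uIoc_of_le ht.1] at hs
      refine (norm_mul_le _ _).trans ?_
      gcongr
      · refine (norm_mul_le _ _).trans ?_
        gcongr
        exact hC _ ⟨by linarith [hs.2], by linarith [hs.1, ht.2]⟩
      · exact ih ⟨hs.1.le, hs.2.trans ht.2⟩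
    · rw [sub_zero, abs_of_nonneg ht.1, pow_succ]
      calc _ ≤ C * ‖w‖ * (M * (C * T * ‖w‖)^k) * T := by gcongr; exact ht.2
        _ = _ := by ring

theorem dyson_exp_bound (Z : A) (T : ℝ) : ∃ C, 0 < C ∧ ∀ r ∈ Set.Icc 0 T, ‖exp (r • Z)‖ ≤ C := by
  have hc : Continuous fun r : ℝ => exp (r • Z) := dyson_exp_continuous (by fun_prop)
  obtain ⟨C, h⟩ := (isCompact_Icc (a := (0:ℝ)) (b := T)).exists_bound_of_continuousOn
    hc.continuousOn
  exact ⟨max C 1, by positivity, fun r hr => (h r hr).trans (le_max_left _ _)⟩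

theorem dyson_hasFPowerSeries (Y : A) {τ : ℝ} (hτ : 0 < τ) :
    ∃ r, HasFPowerSeriesOnBall (fun w : A => exp (τ • (Y + w)))
      (fun k => dysonP Y k τ : FormalMultilinearSeries ℝ A A) 0 r := by
  obtain ⟨C, hC0, hC⟩ := dyson_exp_bound Y τ
  have hτm : τ ∈ Set.Icc 0 τ := ⟨hτ.le, le_rfl⟩
  set r : NNReal := ⟨(C * τ)⁻¹ , by positivity⟩ with hr
  have hrv : (r : ℝ) = (C * τ)⁻¹ := rfl
  have hCt : 0 < C * τ := by positivity
  have hrp : 0 < (r : ℝ) := by rw [hrv]; positivity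
  have hrad : (r : ENNReal) ≤
      FormalMultilinearSeries.radius (fun k => dysonP Y k τ : FormalMultilinearSeries ℝ A A) := by
    refine FormalMultilinearSeries.le_radius_of_bound _ C fun n => ?_
    calc _ ≤ C * (C * τ)^n * (r:ℝ)^n := by gcongr; exact dysonP_norm Y n hC hτm
      _ = C := by rw [mul_assoc, ← mul_pow, hrv, mul_inv_cancel₀ hCt.ne']; simp
  refine ⟨r, hrad, by exact_mod_cast hrp, fun {w} hw => ?_⟩
  have hw' : ‖w‖ < (C * τ)⁻¹ := by
    rw [← hrv]
    simpa [Metric.eball_coe] using hw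
  have hlt : C * τ * ‖w‖ < 1 := by
    calc _ < C * τ * (C * τ)⁻¹ := by gcongr
      _ = 1 := mul_inv_cancel₀ hCt.ne'
  have hsum := FormalMultilinearSeries.summable
    (fun k => dysonP Y k τ : FormalMultilinearSeries ℝ A A)
    (Metric.eball_subset_eball hrad hw)
  rw [hsum.hasSum_iff_tendsto_nat, zero_add]
  obtain ⟨M, hM0, hM⟩ := dyson_exp_bound (Y + w) τ
  rw [tendsto_iff_norm_sub_tendsto_zero]
  refine squeeze_zero (fun _ => norm_nonneg _) (fun N => ?_)
    (g := fun N => M * (C * τ * ‖w‖) ^ N) ?_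
  · rw [norm_sub_rev]
    exact dysonR_norm Y w N hC hM hτm
  · simpa using (tendsto_pow_atTop_nhds_zero_of_lt_one (by positivity) hlt).const_mul M

theorem dyson_iteratedFDeriv (Y : A) {τ : ℝ} (hτ : 0 < τ) (k : ℕ) (v : Fin k → A) :
    iteratedFDeriv ℝ k (fun w : A => exp (τ • (Y + w))) 0 v =
      ∑ π : Equiv.Perm (Fin k), dysonP Y k τ (fun i => v (π i)) := by
  obtain ⟨r, h⟩ := dyson_hasFPowerSeries Y hτ
  exact h.iteratedFDeriv_eq_sum_of_completeSpace v


/-- The simplex. -/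
def dysonS (k : ℕ) (τ : ℝ) : Set (Fin k → ℝ) := {t | Monotone t ∧ ∀ i, t i ∈ Set.Icc 0 τ}

/-- The integrand, defined recursively. -/
noncomputable def dysonG (Y : A) : (k : ℕ) → ℝ → (Fin k → A) → (Fin k → ℝ) → A
  | 0, τ, _, _ => exp (τ • Y)
  | k+1, τ, w, t => exp ((τ - t (Fin.last k)) • Y) * w (Fin.last k) *
      dysonG Y k (t (Fin.last k)) (Fin.init w) (Fin.init t)

theorem dysonG_continuous (Y : A) (k : ℕ) (w : Fin k → A) :
    Continuous fun p : ℝ × (Fin k → ℝ) => dysonG Y k p.1 w p.2 := by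
  induction k with
  | zero => exact dyson_exp_continuous (by fun_prop)
  | succ k ih =>
    have h1 : Continuous fun p : ℝ × (Fin (k+1) → ℝ) => exp ((p.1 - p.2 (Fin.last k)) • Y) :=
      dyson_exp_continuous (by fun_prop)
    have h2 : Continuous fun p : ℝ × (Fin (k+1) → ℝ) =>
        ((p.2 (Fin.last k), Fin.init p.2) : ℝ × (Fin k → ℝ)) := by
      refine Continuous.prodMk (by fun_prop) (continuous_pi fun i => ?_)
      simp only [Fin.init]
      fun_prop
    exact (h1.mul continuous_const).mul ((ih (Fin.init w)).comp h2)

theorem dysonS_succ (k : ℕ) (τ : ℝ) (t : Fin (k+1) → ℝ) :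
    t ∈ dysonS (k+1) τ ↔
      t (Fin.last k) ∈ Set.Icc 0 τ ∧ (Fin.init t : Fin k → ℝ) ∈ dysonS k (t (Fin.last k)) := by
  constructor
  · rintro ⟨hm, h⟩
    exact ⟨h _, fun i j hij => hm (Fin.castSucc_le_castSucc_iff.2 hij),
      fun i => ⟨(h _).1, hm (Fin.le_last _)⟩⟩
  · rintro ⟨hl, hm, h⟩
    refine ⟨fun i j hij => ?_, fun i => ?_⟩
    · induction j using Fin.lastCases with
      | last =>
        induction i using Fin.lastCases with
        | last => exact le_rfl
        | cast i => exact (h i).2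
      | cast j =>
        induction i using Fin.lastCases with
        | last => exact absurd hij (not_le.2 (Fin.castSucc_lt_last j))
        | cast i => exact hm (Fin.castSucc_le_castSucc_iff.1 hij)
    · induction i using Fin.lastCases with
      | last => exact hl
      | cast i => exact ⟨(h i).1, (h i).2.trans hl.2⟩

/-- The simplex of dimension `k+1`, as a subset of a product. -/
def dysonD (k : ℕ) (τ : ℝ) : Set (ℝ × (Fin k → ℝ)) :=
  {p | p.1 ∈ Set.Icc 0 τ ∧ p.2 ∈ dysonS k p.1}

theorem dysonD_compact (k : ℕ) (τ : ℝ) : IsCompact (dysonD k τ) := by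
  have hsub : dysonD k τ ⊆ Set.Icc 0 τ ×ˢ Set.Icc (fun _ => 0) (fun _ => τ) := by
    rintro p ⟨h1, -, h3⟩
    exact ⟨h1, fun i => (h3 i).1, fun i => (h3 i).2.trans h1.2⟩
  refine (isCompact_Icc.prod isCompact_Icc).of_isClosed_subset ?_ hsub
  have : dysonD k τ = {p | p.1 ∈ Set.Icc 0 τ} ∩ ((⋂ i, ⋂ j, ⋂ (_ : i ≤ j), {p | p.2 i ≤ p.2 j}) ∩
      ((⋂ i, {p | 0 ≤ p.2 i}) ∩ ⋂ i, {p | p.2 i ≤ p.1})) := by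
    ext p
    simp [dysonD, dysonS, Monotone, forall_and]
  rw [this]
  refine IsClosed.inter (isClosed_Icc.preimage continuous_fst) (IsClosed.inter ?_ (IsClosed.inter
    ?_ ?_))
  · exact isClosed_iInter fun i => isClosed_iInter fun j => isClosed_iInter fun _ =>
      isClosed_le (by fun_prop) (by fun_prop)
  · exact isClosed_iInter fun i => isClosed_le (by fun_prop) (by fun_prop)
  · exact isClosed_iInter fun i => isClosed_le (by fun_prop) (by fun_prop)

theorem dysonS_compact (k : ℕ) (τ : ℝ) : IsCompact (dysonS k τ) := by
  have hsub : dysonS k τ ⊆ Set.Icc (fun _ => 0) (fun _ => τ) := by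
    rintro p ⟨-, h3⟩
    exact ⟨fun i => (h3 i).1, fun i => (h3 i).2⟩
  refine isCompact_Icc.of_isClosed_subset ?_ hsub
  have : dysonS k τ = ((⋂ i, ⋂ j, ⋂ (_ : i ≤ j), {p | p i ≤ p j}) ∩
      ((⋂ i, {p | 0 ≤ p i}) ∩ ⋂ i, {p | p i ≤ τ})) := by
    ext p
    simp [dysonS, Monotone, forall_and]
  rw [this]
  refine (IsClosed.inter ?_ (IsClosed.inter ?_ ?_))
  · exact isClosed_iInter fun i => isClosed_iInter fun j => isClosed_iInter fun _ =>
      isClosed_le (by fun_prop) (by fun_prop)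
  · exact isClosed_iInter fun i => isClosed_le (by fun_prop) (by fun_prop)
  · exact isClosed_iInter fun i => isClosed_le (by fun_prop) (by fun_prop)

theorem dysonP_eq_integral (Y : A) (k : ℕ) {τ : ℝ} (hτ : 0 ≤ τ) (w : Fin k → A) :
    dysonP Y k τ w = ∫ t in dysonS k τ, dysonG Y k τ w t := by
  induction k generalizing τ with
  | zero =>
    have h1 : dysonS 0 τ = Set.univ := by
      ext t; simp [dysonS, Subsingleton.monotone]
    have h2 : dysonP Y 0 τ w = exp (τ • Y) := rfl
    simp only [h1, h2, dysonG, Measure.restrict_univ, integral_const]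
    simp [Measure.real, volume_pi]
  | succ k ih =>
    classical
    set H : ℝ × (Fin k → ℝ) → A := fun p =>
      exp ((τ - p.1) • Y) * w (Fin.last k) * dysonG Y k p.1 (Fin.init w) p.2 with hH
    have hHc : Continuous H :=
      ((dyson_exp_continuous (by fun_prop)).mul continuous_const).mul (dysonG_continuous Y k _)
    have hDm : MeasurableSet (dysonD k τ) := (dysonD_compact k τ).measurableSet
    have hint : Integrable ((dysonD k τ).indicator H) (volume.prod volume) :=
      (integrable_indicator_iff hDm).2 (hHc.continuousOn.integrableOn_compact (dysonD_compact k τ))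
    have e1 : ∫ t in dysonS (k+1) τ, dysonG Y (k+1) τ w t =
        ∫ p, (dysonD k τ).indicator H p ∂(volume.prod volume) := by
      rw [← integral_indicator (dysonS_compact _ _).measurableSet]
      have h := (volume_preserving_piFinSuccAbove (fun _ : Fin (k+1) => ℝ) (Fin.last k)).integral_comp'
        ((dysonD k τ).indicator H)
      rw [← Measure.volume_eq_prod]
      rw [← h]
      refine integral_congr_ae (Filter.Eventually.of_forall fun t => ?_)
      have he : MeasurableEquiv.piFinSuccAbove (fun _ : Fin (k+1) => ℝ) (Fin.last k) t =
          (t (Fin.last k), Fin.init t) := by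
        ext i
        · rfl
        · simp [MeasurableEquiv.piFinSuccAbove, Fin.insertNthEquiv, Fin.init]
      simp only [he, Set.indicator_apply, dysonS_succ]
      exact if_congr Iff.rfl rfl rfl
    rw [e1, integral_prod _ hint, dysonP_succ_apply, intervalIntegral.integral_of_le hτ,
      ← integral_Icc_eq_integral_Ioc, ← integral_indicator measurableSet_Icc]
    refine integral_congr_ae (Filter.Eventually.of_forall fun s => ?_)
    by_cases hs : s ∈ Set.Icc 0 τ
    · simp only [Set.indicator_of_mem hs]
      rw [ih hs.1]
      have hg : IntegrableOn (fun t => dysonG Y k s (Fin.init w) t) (dysonS k s) :=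
        ContinuousOn.integrableOn_compact (dysonS_compact k s)
          (((dysonG_continuous Y k (Fin.init w)).comp
            (continuous_const.prodMk continuous_id)).continuousOn)
      rw [← integral_const_mul_of_integrable hg, ← integral_indicator (dysonS_compact _ _).measurableSet]
      refine integral_congr_ae (Filter.Eventually.of_forall fun u => ?_)
      have : (s, u) ∈ dysonD k τ ↔ u ∈ dysonS k s := by simp [dysonD, hs.1, hs.2]
      simp only [Set.indicator_apply, this]
      rfl
    · simp only [Set.indicator_of_notMem hs]
      have : ∀ u, (dysonD k τ).indicator H (s, u) = 0 := fun u =>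
        Set.indicator_of_notMem (fun h => hs h.1) _
      simp [this]

theorem dysonG_eq (Y : A) (m : ℕ) (τ : ℝ) (w : Fin (m+1) → A) (t : Fin (m+1) → ℝ) :
    dysonG Y (m+1) τ w t = exp ((τ - t (Fin.last m)) • Y) *
      (List.ofFn (fun i : Fin (m+1) => w i *
        exp ((t i - if (i : ℕ) = 0 then 0
          else t ⟨(i : ℕ) - 1, by have := i.isLt; omega⟩) • Y))).reverse.prod := by
  induction m generalizing τ with
  | zero => simp [dysonG, mul_assoc]
  | succ m ih =>
    rw [List.ofFn_succ', List.concat_eq_append, List.reverse_append, List.prod_append]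
    simp only [List.reverse_singleton, List.prod_singleton]
    rw [dysonG, ih, mul_assoc, mul_assoc]
    rfl

theorem dyson_general (Y : A) {τ : ℝ} (hτ : 0 < τ) (m n : ℕ) (X : Fin n → A)
    (v : Fin (m+1) → Fin n) :
    iteratedFDeriv ℝ (m+1) (fun γ : Fin n → ℝ => exp (τ • (Y + ∑ j, γ j • X j))) 0
        (fun i => Pi.single (v i) 1) =
      ∑ π : Equiv.Perm (Fin (m+1)), ∫ t in dysonS (m+1) τ,
        exp ((τ - t (Fin.last m)) • Y) *
      (List.ofFn (fun i : Fin (m+1) => X (v (π i)) *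
        exp ((t i - if (i : ℕ) = 0 then 0
          else t ⟨(i : ℕ) - 1, by have := i.isLt; omega⟩) • Y))).reverse.prod := by
  let ℓ : (Fin n → ℝ) →L[ℝ] A :=
    ∑ j, (ContinuousLinearMap.proj (R := ℝ) (φ := fun _ : Fin n => ℝ) j).smulRight (X j)
  have hℓ : ∀ γ, ℓ γ = ∑ j, γ j • X j := fun γ => by simp [ℓ]
  have hcd : ContDiff ℝ ⊤ (fun w : A => exp (τ • (Y + w))) := by
    refine ContDiff.comp (g := (exp : A → A)) ?_ (by fun_prop)
    exact AnalyticOnNhd.contDiff fun x _ => exp_analytic (𝕂 := ℝ) x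
  have h := ℓ.iteratedFDeriv_comp_right hcd 0 (i := m+1) le_top
  have hf : (fun γ : Fin n → ℝ => exp (τ • (Y + ∑ j, γ j • X j))) =
      (fun w : A => exp (τ • (Y + w))) ∘ ℓ := by
    ext γ; simp [hℓ]
  have hs : ∀ j, ℓ (Pi.single j 1) = X j := fun j => by
    rw [hℓ]; simp [Pi.single_apply]
  rw [hf, h, ContinuousMultilinearMap.compContinuousLinearMap_apply, map_zero,
    dyson_iteratedFDeriv Y hτ]
  refine Finset.sum_congr rfl fun π _ => ?_
  rw [dysonP_eq_integral Y _ hτ.le]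
  simp only [dysonG_eq, hs]

theorem dyson_transport {M : Type*} [NormedAddCommGroup M] [NormedSpace ℝ M] [CompleteSpace M]
    (L : A →L[ℝ] M) (Y : A) {τ : ℝ} (hτ : 0 < τ) (m n : ℕ)
    (X : Fin n → A) (v : Fin (m+1) → Fin n) (f : (Fin n → ℝ) → M)
    (F : Equiv.Perm (Fin (m+1)) → (Fin (m+1) → ℝ) → M)
    (hf : ∀ γ, f γ = L (exp (τ • (Y + ∑ j, γ j • X j))))
    (hF : ∀ π t, F π t = L (exp ((τ - t (Fin.last m)) • Y) *
      (List.ofFn (fun i : Fin (m+1) => X (v (π i)) *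
        exp ((t i - if (i : ℕ) = 0 then 0
          else t ⟨(i : ℕ) - 1, by have := i.isLt; omega⟩) • Y))).reverse.prod)) :
    iteratedFDeriv ℝ (m+1) f 0 (fun i => Pi.single (v i) 1) =
      ∑ π : Equiv.Perm (Fin (m+1)),
        ∫ t in {t : Fin (m+1) → ℝ | Monotone t ∧ ∀ i, t i ∈ Set.Icc 0 τ}, F π t := by
  have hf' : f = L ∘ (fun γ : Fin n → ℝ => exp (τ • (Y + ∑ j, γ j • X j))) := by
    ext1 γ; exact hf γ
  have hcd : ContDiff ℝ ⊤ (fun γ : Fin n → ℝ => exp (τ • (Y + ∑ j, γ j • X j))) := by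
    refine ContDiff.comp (g := (exp : A → A)) ?_ (by fun_prop)
    exact AnalyticOnNhd.contDiff fun x _ => exp_analytic (𝕂 := ℝ) x
  rw [hf', L.iteratedFDeriv_comp_left hcd.contDiffAt le_top,
    ContinuousLinearMap.compContinuousMultilinearMap_coe, Function.comp_apply,
    dyson_general Y hτ m n X v, map_sum]
  refine Finset.sum_congr rfl fun π _ => ?_
  have hc : Continuous fun t : Fin (m+1) → ℝ =>
      dysonG Y (m+1) τ (fun i => X (v (π i))) t :=
    (dysonG_continuous Y (m+1) (fun i => X (v (π i)))).comp
      ((continuous_const (y := τ)).prodMk continuous_id)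
  simp only [dysonG_eq] at hc
  rw [← L.integral_comp_comm (hc.continuousOn.integrableOn_compact (dysonS_compact _ _))]
  simp only [hF]
  rfl

theorem dyson_map_exp {M : Type*} [Ring M] [TopologicalSpace M] [IsTopologicalRing M] [T2Space M]
    [Algebra ℝ M] (f : A →ₐ[ℝ] M) (hf : Continuous f) (a : A) : f (exp a) = exp (f a) := by
  rw [exp_eq_tsum ℝ, exp_eq_tsum ℝ]
  refine ((expSeries_summable' (𝕂 := ℝ) a).hasSum.map f hf).tsum_eq.symm.trans ?_
  simp

end Dyson

theorem mixedPartial_eq {n k : ℕ} {E : Type*} [NormedAddCommGroup E]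
    [NormedSpace ℝ E] (h : (Fin n → ℝ) → E) (a : Finset (Fin n)) (ha : a.card = k)
    (x : Fin n → ℝ) : mixedPartial h a x =
      iteratedFDeriv ℝ k h x (fun i => Pi.single (a.orderEmbOfFin ha i) 1) := by
  subst ha; rfl

theorem dyson_orderEmb {n k : ℕ} (hkn : k ≤ n)
    (ha : (Finset.univ.filter (fun j : Fin n => (j : ℕ) < k)).card = k) (i : Fin k) :
    (Finset.univ.filter (fun j : Fin n => (j : ℕ) < k)).orderEmbOfFin ha i =
      Fin.castLE hkn i := by
  have := Finset.orderEmbOfFin_unique ha (f := Fin.castLE hkn) (fun x => by simp)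
    (Fin.strictMono_castLE hkn)
  rw [this]

theorem dyson_card {n k : ℕ} (hkn : k ≤ n) :
    (Finset.univ.filter (fun j : Fin n => (j : ℕ) < k)).card = k := by
  have : (Finset.univ.filter (fun j : Fin n => (j : ℕ) < k)) =
      Finset.univ.map (Fin.castLEEmb hkn) := by
    ext j
    simp only [Finset.mem_filter, Finset.mem_univ, true_and, Finset.mem_map]
    exact ⟨fun h => ⟨⟨j, h⟩, rfl⟩, fun ⟨i, hi⟩ => by rw [← hi]; exact i.isLt⟩
  rw [this]; simp

/-- Dyson lemma: for `d×d` complex matrices `Y, X_1, …, X_n`, `τ > 0` and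
`1 ≤ k ≤ n`, the mixed partial derivative `∂^k/∂γ_1⋯∂γ_k` of
`γ ↦ exp(τ(Y + ∑_j γ_j X_j))` at `γ = 0` equals the sum over all permutations
`π` of `{1,…,k}` of the integral over the simplex `0 ≤ t_1 ≤ ⋯ ≤ t_k ≤ τ` of
`e^{(τ−t_k)Y} X_{π(k)} e^{(t_k−t_{k−1})Y} ⋯ e^{(t_2−t_1)Y} X_{π(1)} e^{t_1 Y}`. -/
theorem dyson_lemma (d n k : ℕ) (hk : 1 ≤ k) (hkn : k ≤ n)
    (Y : Matrix (Fin d) (Fin d) ℂ) (X : Fin n → Matrix (Fin d) (Fin d) ℂ)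
    (τ : ℝ) (hτ : 0 < τ) :
    mixedPartial (fun γ : Fin n → ℝ => exp (τ • (Y + ∑ j, γ j • X j)))
        (Finset.univ.filter (fun j : Fin n => (j : ℕ) < k)) 0 =
      ∑ π : Equiv.Perm (Fin k),
        ∫ t in {t : Fin k → ℝ | Monotone t ∧ ∀ i, t i ∈ Set.Icc 0 τ},
          exp ((τ - t ⟨k - 1, by omega⟩) • Y) *
            (List.ofFn (fun i : Fin k =>
              X (Fin.castLE hkn (π i)) *
                exp ((t i - if (i : ℕ) = 0 then 0
                  else t ⟨(i : ℕ) - 1, by have := i.isLt; omega⟩) • Y))).reverse.prod := by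
  obtain ⟨m, rfl⟩ : ∃ m, k = m + 1 := ⟨k - 1, by omega⟩
  rw [mixedPartial_eq _ _ (dyson_card hkn)]
  simp only [dyson_orderEmb hkn]
  let φ := Matrix.toEuclideanCLM (n := Fin d) (𝕜 := ℂ)
  let B := EuclideanSpace ℂ (Fin d) →L[ℂ] EuclideanSpace ℂ (Fin d)
  let L0 : B →ₗ[ℝ] Matrix (Fin d) (Fin d) ℂ :=
    (φ.symm.toAlgEquiv.toLinearEquiv.toLinearMap).restrictScalars ℝ
  have : FiniteDimensional ℝ B := FiniteDimensional.complexToReal B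
  let L : B →L[ℝ] Matrix (Fin d) (Fin d) ℂ := LinearMap.toContinuousLinearMap L0
  have hLφ : ∀ M, L (φ M) = M := fun M => φ.symm_apply_apply M
  have hLmul : ∀ a b, L (a * b) = L a * L b := fun a b => map_mul φ.symm a b
  have hLexp : ∀ a, L (exp a) = exp (L a) := fun a =>
    dyson_map_exp (φ.symm.toAlgEquiv.toAlgHom.restrictScalars ℝ) L.continuous a
  have hLprod : ∀ l : List B, L l.prod = (l.map L).prod := fun l => map_list_prod φ.symm l
  have h1 : ∀ γ : Fin n → ℝ, exp (τ • (Y + ∑ j, γ j • X j)) =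
      L (exp (τ • (φ Y + ∑ j, γ j • φ (X j)))) := by
    intro γ
    simp only [hLexp, map_smul, map_add, map_sum, hLφ]
  have h2 : ∀ (π : Equiv.Perm (Fin (m+1))) (t : Fin (m+1) → ℝ),
      exp ((τ - t (Fin.last m)) • Y) *
            (List.ofFn (fun i : Fin (m+1) =>
              X (Fin.castLE hkn (π i)) *
                exp ((t i - if (i : ℕ) = 0 then 0
                  else t ⟨(i : ℕ) - 1, by have := i.isLt; omega⟩) • Y))).reverse.prod =
      L (exp ((τ - t (Fin.last m)) • φ Y) *
            (List.ofFn (fun i : Fin (m+1) =>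
              φ (X (Fin.castLE hkn (π i))) *
                exp ((t i - if (i : ℕ) = 0 then 0
                  else t ⟨(i : ℕ) - 1, by have := i.isLt; omega⟩) • φ Y))).reverse.prod) := by
    intro π t
    simp only [hLmul, hLexp, hLprod, map_smul, hLφ, List.map_reverse, List.map_ofFn,
      Function.comp_def]
  exact dyson_transport L (φ Y) hτ m n (fun j => φ (X j)) (Fin.castLE hkn) _ _ h1 h2
end
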